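/- Minimax duality for the perturbed information-regret game: if Λ is a compact set and d(k,·) is continuous for each k, then max_{w̃∈Δ} inf_{λ∈Λ} Σ_k w̃^k d(k,λ)/Δ_ε^k = inf_{q∈Δ(Λ)} max_k E_{λ∼q}[d(k,λ)]/Δ_ε^k, where Δ(Λ) is the set of probability measures on Λ. -/

import Mathlib

open MeasureTheory

/-!
Let `f` be a finite family of bounded payoffs on `Λ`. A mixed strategy `q` enters the game only
through the vector of means `(∫ f k ∂q)ₖ`, and these vectors form a convex set in `ι → ℝ`. On this
set and the compact simplex the payoff is bilinear, so Sion's theorem swaps the two optimisations.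
Point masses then reduce the infimum over `q` of a fixed mean to an infimum over `Λ`, and vertices
of the simplex reduce the supremum over weights to a maximum over `k`.
-/

section RealMinimax

variable {E F : Type*}
  [TopologicalSpace E] [AddCommGroup E] [Module ℝ E] [IsTopologicalAddGroup E] [ContinuousSMul ℝ E]
  [TopologicalSpace F] [AddCommGroup F] [Module ℝ F] [IsTopologicalAddGroup F] [ContinuousSMul ℝ F]
  {X : Set E} {Y : Set F} {f : E → F → ℝ}

theorem iSup_iInf_eq_iInf_iSup_of_isCompact (hX : X.Nonempty) (hXc : Convex ℝ X)
    (hXk : IsCompact X) (hY : Y.Nonempty) (hYc : Convex ℝ Y)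
    (husc : ∀ y ∈ Y, UpperSemicontinuousOn (f · y) X)
    (hconcave : ∀ y ∈ Y, QuasiconcaveOn ℝ X (f · y))
    (hlsc : ∀ x ∈ X, LowerSemicontinuousOn (f x) Y)
    (hconvex : ∀ x ∈ X, QuasiconvexOn ℝ Y (f x))
    (hbdd : ∀ x ∈ X, BddBelow (f x '' Y)) :
    ⨆ x : X, ⨅ y : Y, f x y = ⨅ y : Y, ⨆ x : X, f x y := by
  have isGLB_iInf (x) (hx : x ∈ X) : IsGLB (f x '' Y) (⨅ y : Y, f x y) :=
    isGLB_ciInf_set (hbdd x hx) hY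
  have isLUB_iSup (y) (hy : y ∈ Y) : IsLUB ((f · y) '' X) (⨆ x : X, f x y) :=
    isLUB_ciSup_set ((husc y hy).bddAbove_of_isCompact hXk) hX
  have iInf_le_iSup (x) (hx : x ∈ X) (y) (hy : y ∈ Y) : ⨅ y : Y, f x y ≤ ⨆ x : X, f x y :=
    ((isGLB_iInf x hx).1 ⟨y, hy, rfl⟩).trans ((isLUB_iSup y hy).1 ⟨x, hx, rfl⟩)
  have bddAbove_iInf : BddAbove ((fun x ↦ ⨅ y : Y, f x y) '' X) :=
    hY.elim fun y hy ↦ ⟨_, Set.forall_mem_image.2 fun x hx ↦ iInf_le_iSup x hx y hy⟩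
  have bddBelow_iSup : BddBelow ((fun y ↦ ⨆ x : X, f x y) '' Y) :=
    hX.elim fun x hx ↦ ⟨_, Set.forall_mem_image.2 fun y hy ↦ iInf_le_iSup x hx y hy⟩
  -- `Sion.minimax` has its minimiser in the compact set, so it is applied in the dual order.
  exact Sion.minimax (β := ℝᵒᵈ) (f := f) hX hXk husc hconcave hYc hlsc hconvex hXc
    _ (fun x hx ↦ (isGLB_iInf x hx).dual) _ (isLUB_ciSup_set bddAbove_iInf hX).dual
    _ (fun y hy ↦ (isLUB_iSup y hy).dual) _ (isGLB_ciInf_set bddBelow_iSup hY).dual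

end RealMinimax

-- A supremum over `x ∈ s` with `x ∉ s` is over an empty index, where its value is `0`.
theorem biSup_mem_eq_iSup_of_nonneg {α : Type*} {s : Set α} {g : α → ℝ} (hg : ∀ x ∈ s, 0 ≤ g x) :
    ⨆ x ∈ s, g x = ⨆ x : s, g x := by
  by_cases hbdd : BddAbove (Set.range fun x : s ↦ g x)
  · refine cbiSup_eq_ciSup_subtype hbdd ?_
    simpa only [Real.sSup_empty] using Real.iSup_nonneg fun x : s ↦ hg x x.2
  · exact (cbiSup_of_not_bddAbove hbdd).trans (ciSup_of_not_bddAbove hbdd).symm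

section StdSimplex

variable {ι : Type*} [Fintype ι]

lemma monotone_dotProduct {w : ι → ℝ} (hw : 0 ≤ w) : Monotone (w ⬝ᵥ ·) :=
  fun _ _ hxy ↦ dotProduct_le_dotProduct_of_nonneg_left hxy hw

theorem iSup_stdSimplex_dotProduct [Nonempty ι] (x : ι → ℝ) :
    ⨆ w : stdSimplex ℝ ι, (w : ι → ℝ) ⬝ᵥ x = ⨆ k, x k := by
  classical
  have dotProduct_le (w : stdSimplex ℝ ι) : (w : ι → ℝ) ⬝ᵥ x ≤ ⨆ k, x k :=
    calc (w : ι → ℝ) ⬝ᵥ x ≤ (w : ι → ℝ) ⬝ᵥ fun _ ↦ ⨆ k, x k :=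
          monotone_dotProduct w.2.1 fun k ↦ le_ciSup (Set.finite_range x).bddAbove k
      _ = ⨆ k, x k := by
          simp only [dotProduct, ← Finset.sum_mul, stdSimplex.sum_eq_one, one_mul]
  refine le_antisymm (ciSup_le dotProduct_le) (ciSup_le fun k ↦ ?_)
  refine le_ciSup_of_le ⟨_, Set.forall_mem_range.2 dotProduct_le⟩
    ⟨Pi.single k 1, single_mem_stdSimplex ℝ k⟩ ?_
  exact (single_one_dotProduct k x).ge

theorem iSup_stdSimplex_iInf_dotProduct [Nonempty ι] {C : Set (ι → ℝ)} (hC : C.Nonempty)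
    (hconv : Convex ℝ C) (hbdd : BddBelow C) :
    ⨆ w : stdSimplex ℝ ι, ⨅ x : C, (w : ι → ℝ) ⬝ᵥ (x : ι → ℝ) = ⨅ x : C, ⨆ k, (x : ι → ℝ) k := by
  classical
  have concave_left (x : ι → ℝ) : ConcaveOn ℝ (stdSimplex ℝ ι) (· ⬝ᵥ x) :=
    ((dotProductBilin ℝ ℝ).flip x).concaveOn (convex_stdSimplex ℝ ι)
  have convex_right (w : ι → ℝ) : ConvexOn ℝ C (w ⬝ᵥ ·) :=
    (dotProductBilin ℝ ℝ w).convexOn hconv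
  simp_rw [← iSup_stdSimplex_dotProduct]
  exact iSup_iInf_eq_iInf_iSup_of_isCompact
    ⟨_, single_mem_stdSimplex ℝ (Classical.arbitrary ι)⟩ (convex_stdSimplex ℝ ι)
    (isCompact_stdSimplex ℝ ι) hC hconv
    (fun x _ ↦ (by fun_prop : Continuous (· ⬝ᵥ x)).upperSemicontinuous.upperSemicontinuousOn _)
    (fun x _ ↦ (concave_left x).quasiconcaveOn)
    (fun w _ ↦ (by fun_prop : Continuous (w ⬝ᵥ ·)).lowerSemicontinuous.lowerSemicontinuousOn _)
    (fun w _ ↦ (convex_right w).quasiconvexOn)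
    (fun w hw ↦ (monotone_dotProduct hw.1).map_bddBelow hbdd)

end StdSimplex

section MixedStrategies

variable {ι Λ : Type*} [MeasurableSpace Λ]

lemma integrable_of_isBounded_range {g : Λ → ℝ} (hg : Measurable g)
    (hbdd : Bornology.IsBounded (Set.range g)) (μ : Measure Λ) [IsFiniteMeasure μ] :
    Integrable g μ := by
  obtain ⟨C, hC⟩ := hbdd.exists_norm_le
  exact .of_bound hg.aestronglyMeasurable C (ae_of_all _ fun l ↦ hC _ ⟨l, rfl⟩)

instance nonempty_probabilityMeasure [Nonempty Λ] : Nonempty (ProbabilityMeasure Λ) :=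
  ‹Nonempty Λ›.map fun l ↦ ⟨Measure.dirac l, inferInstance⟩

theorem iInf_integral_probabilityMeasure [Nonempty Λ] {g : Λ → ℝ} (hg : Measurable g)
    (hint : ∀ q : ProbabilityMeasure Λ, Integrable g (q : Measure Λ))
    (hbdd : BddBelow (Set.range g)) :
    ⨅ q : ProbabilityMeasure Λ, ∫ l, g l ∂(q : Measure Λ) = ⨅ l, g l := by
  have iInf_le_integral (q : ProbabilityMeasure Λ) : ⨅ l, g l ≤ ∫ l, g l ∂(q : Measure Λ) :=
    let ⟨l, hl⟩ := exists_le_integral (hint q)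
    ciInf_le_of_le hbdd l hl
  refine le_antisymm (le_ciInf fun l ↦ ?_) (le_ciInf iInf_le_integral)
  refine ciInf_le_of_le ⟨_, Set.forall_mem_range.2 iInf_le_integral⟩
    ⟨Measure.dirac l, inferInstance⟩ ?_
  exact (integral_dirac' g l hg.stronglyMeasurable).le

/-- The payoff vectors `k ↦ E_{l ∼ q}[f k l]` achievable by mixed strategies `q` on `Λ`. -/
def meanPayoffs (f : ι → Λ → ℝ) : Set (ι → ℝ) :=
  Set.range fun (q : ProbabilityMeasure Λ) k ↦ ∫ l, f k l ∂(q : Measure Λ)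

variable {f : ι → Λ → ℝ}

lemma meanPayoffs_nonempty [Nonempty Λ] : (meanPayoffs f).Nonempty :=
  Set.range_nonempty _

theorem convex_meanPayoffs
    (hint : ∀ k (q : ProbabilityMeasure Λ), Integrable (f k) (q : Measure Λ)) :
    Convex ℝ (meanPayoffs f) := by
  rintro _ ⟨p, rfl⟩ _ ⟨q, rfl⟩ a b ha hb hab
  let mixture : Measure Λ :=
    ENNReal.ofReal a • (p : Measure Λ) + ENNReal.ofReal b • (q : Measure Λ)
  have : IsProbabilityMeasure mixture :=
    ⟨by simp [mixture, ← ENNReal.ofReal_add ha hb, hab]⟩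
  refine ⟨⟨mixture, this⟩, funext fun k ↦ ?_⟩
  calc ∫ l, f k l ∂mixture
      = ∫ l, f k l ∂(ENNReal.ofReal a • (p : Measure Λ)) +
          ∫ l, f k l ∂(ENNReal.ofReal b • (q : Measure Λ)) :=
        integral_add_measure ((hint k p).smul_measure ENNReal.ofReal_ne_top)
          ((hint k q).smul_measure ENNReal.ofReal_ne_top)
    _ = a • ∫ l, f k l ∂(p : Measure Λ) + b • ∫ l, f k l ∂(q : Measure Λ) := by
        simp only [integral_smul_measure, ENNReal.toReal_ofReal ha, ENNReal.toReal_ofReal hb]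

lemma bddBelow_meanPayoffs
    (hint : ∀ k (q : ProbabilityMeasure Λ), Integrable (f k) (q : Measure Λ))
    (hbdd : ∀ k, BddBelow (Set.range (f k))) : BddBelow (meanPayoffs f) := by
  choose b hb using hbdd
  refine ⟨b, Set.forall_mem_range.2 fun q k ↦ ?_⟩
  obtain ⟨l, hl⟩ := exists_le_integral (hint k q)
  exact (hb k ⟨l, rfl⟩).trans hl

theorem iInf_meanPayoffs_dotProduct [Fintype ι] [Nonempty Λ] (hf : ∀ k, Measurable (f k))
    (hint : ∀ k (q : ProbabilityMeasure Λ), Integrable (f k) (q : Measure Λ))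
    (hbdd : ∀ k, BddBelow (Set.range (f k))) {w : ι → ℝ} (hw : 0 ≤ w) :
    ⨅ x : meanPayoffs f, w ⬝ᵥ (x : ι → ℝ) = ⨅ l, w ⬝ᵥ (f · l) := by
  have integrable_term (q : ProbabilityMeasure Λ) (k : ι) :
      Integrable (fun l ↦ w k * f k l) (q : Measure Λ) := (hint k q).const_mul (w k)
  have bddBelow_dotProduct : BddBelow (Set.range fun l ↦ w ⬝ᵥ (f · l)) := by
    have := (monotone_dotProduct hw).map_bddBelow (bddBelow_range_pi.2 hbdd)
    rwa [← Set.range_comp] at this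
  calc ⨅ x : meanPayoffs f, w ⬝ᵥ (x : ι → ℝ)
      = ⨅ q : ProbabilityMeasure Λ, w ⬝ᵥ fun k ↦ ∫ l, f k l ∂(q : Measure Λ) := iInf_range' _ _
    _ = ⨅ q : ProbabilityMeasure Λ, ∫ l, w ⬝ᵥ (f · l) ∂(q : Measure Λ) := by
        simp only [dotProduct, integral_finsetSum _ fun k _ ↦ integrable_term _ k,
          integral_const_mul]
    _ = ⨅ l, w ⬝ᵥ (f · l) :=
        iInf_integral_probabilityMeasure
          (Finset.measurable_sum _ fun k _ ↦ (hf k).const_mul (w k))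
          (fun q ↦ integrable_finsetSum _ fun k _ ↦ integrable_term q k) bddBelow_dotProduct

end MixedStrategies

theorem information_regret_minimax_general {ι Λ : Type*} [Fintype ι] [Nonempty ι]
    [MeasurableSpace Λ] [Nonempty Λ] {f : ι → Λ → ℝ} (hf : ∀ k, Measurable (f k))
    (hbdd : ∀ k, Bornology.IsBounded (Set.range (f k))) :
    ⨆ w : stdSimplex ℝ ι, ⨅ l, ∑ k, w k * f k l =
      ⨅ q : ProbabilityMeasure Λ, ⨆ k, ∫ l, f k l ∂(q : Measure Λ) := by
  have hint (k) (q : ProbabilityMeasure Λ) : Integrable (f k) (q : Measure Λ) :=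
    integrable_of_isBounded_range (hf k) (hbdd k) q
  have hbelow (k) : BddBelow (Set.range (f k)) := (hbdd k).bddBelow
  calc ⨆ w : stdSimplex ℝ ι, ⨅ l, ∑ k, w k * f k l
      = ⨆ w : stdSimplex ℝ ι, ⨅ x : meanPayoffs f, (w : ι → ℝ) ⬝ᵥ (x : ι → ℝ) :=
        iSup_congr fun w ↦ (iInf_meanPayoffs_dotProduct hf hint hbelow w.2.1).symm
    _ = ⨅ x : meanPayoffs f, ⨆ k, (x : ι → ℝ) k :=
        iSup_stdSimplex_iInf_dotProduct meanPayoffs_nonempty (convex_meanPayoffs hint)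
          (bddBelow_meanPayoffs hint hbelow)
    _ = ⨅ q : ProbabilityMeasure Λ, ⨆ k, ∫ l, f k l ∂(q : Measure Λ) := iInf_range' _ _

/-- Minimax duality for the perturbed information-regret game: randomising the
`λ`-player licenses the min-max swap. -/
theorem information_regret_minimax {K : ℕ} [Nonempty (Fin K)]
    {Λ : Type*} [MetricSpace Λ] [CompactSpace Λ] [Nonempty Λ]
    [MeasurableSpace Λ] [BorelSpace Λ]
    (d : Fin K → Λ → ℝ) (hdc : ∀ k, Continuous (d k)) (hd : ∀ k l, 0 ≤ d k l)
    (Δ : Fin K → ℝ) (hΔ : ∀ k, 0 < Δ k) :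
    (⨆ w ∈ stdSimplex ℝ (Fin K), ⨅ l : Λ, ∑ k, w k * (d k l / Δ k)) =
    ⨅ q : ProbabilityMeasure Λ, ⨆ k : Fin K,
      (∫ l, d k l ∂(q : Measure Λ)) / Δ k := by
  have hcont (k) : Continuous fun l ↦ d k l / Δ k := (hdc k).div_const (Δ k)
  rw [biSup_mem_eq_iSup_of_nonneg fun w hw ↦ Real.iInf_nonneg fun l ↦ Finset.sum_nonneg
    fun k _ ↦ mul_nonneg (hw.1 k) (div_nonneg (hd k l) (hΔ k).le)]
  simp only [← integral_div]
  exact information_regret_minimax_general (fun k ↦ (hcont k).measurable)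
    fun k ↦ (isCompact_range (hcont k)).isBounded
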